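/- arXiv:1901.10944 — 2 statements merged into one kernel-verified Lean document; each statement's English description precedes it below -/
import Mathlib

section
/- Let A = (a, b; c, d) be a 2×2 real matrix with strictly positive entries. Then for every z ∈ D, the principal argument of w_A(z) satisfies |Arg(w_A(z))| ≤ arcsin( |a+c−b−d| / (a+b+c+d) ). -/
open Complex

/-- The complex affine map `w_A(z) = (a+c−b−d)z + b + d`. -/
noncomputable def wC (a b c d : ℝ) (z : ℂ) : ℂ :=
  ((a : ℂ) + c - b - d) * z + b + d

/-!
`w_A` maps the disc `D` into the closed disc of radius `|a+c−b−d|/2` centred at the positive real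
number `(a+b+c+d)/2`, which misses the origin. By the law of sines, such a disc is seen from the
origin within an angle of at most `arcsin (radius / distance to the centre)` on either side of the
direction of its centre.
-/

section Angle

open InnerProductGeometry

variable {V : Type*} [NormedAddCommGroup V] [InnerProductSpace ℝ V] {x y : V}

theorem angle_le_pi_div_two_of_norm_sub_le (h : ‖x - y‖ ≤ ‖x‖) : angle x y ≤ Real.pi / 2 := by
  have hsq : ‖x - y‖ ^ 2 ≤ ‖x‖ ^ 2 := by gcongr
  rw [norm_sub_sq_real] at hsq
  have hinner : 0 ≤ inner ℝ x y := by linarith [sq_nonneg ‖y‖]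
  exact Real.arccos_le_pi_div_two.2 (by positivity)

theorem sin_angle_le_norm_sub_div_norm (hx : x ≠ 0) :
    Real.sin (angle x y) ≤ ‖x - y‖ / ‖x‖ := by
  rw [le_div_iff₀ (norm_pos_iff.2 hx), sin_angle_mul_norm_eq_sin_angle_mul_norm]
  exact mul_le_of_le_one_left (norm_nonneg _) (Real.sin_le_one _)

theorem angle_le_arcsin_norm_sub_div_norm (hx : x ≠ 0) (h : ‖x - y‖ ≤ ‖x‖) :
    angle x y ≤ Real.arcsin (‖x - y‖ / ‖x‖) := by
  have hangle : angle x y ∈ Set.Ioc (-(Real.pi / 2)) (Real.pi / 2) :=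
    ⟨by linarith [Real.pi_pos, angle_nonneg x y], angle_le_pi_div_two_of_norm_sub_le h⟩
  rw [Real.le_arcsin_iff_sin_le' hangle]
  exact sin_angle_le_norm_sub_div_norm hx

end Angle

theorem angle_ofReal_left_eq_abs_arg {r : ℝ} (hr : 0 < r) {w : ℂ} (hw : w ≠ 0) :
    InnerProductGeometry.angle (r : ℂ) w = |arg w| := by
  rw [← mul_one (r : ℂ), ← real_smul, InnerProductGeometry.angle_smul_left_of_pos _ _ hr,
    angle_one_left hw]

theorem abs_arg_le_arcsin_of_mem_closedBall {r ρ : ℝ} (hρ : ρ < r) {w : ℂ}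
    (hw : w ∈ Metric.closedBall (r : ℂ) ρ) : |arg w| ≤ Real.arcsin (ρ / r) := by
  have hdist : ‖(r : ℂ) - w‖ ≤ ρ := by rwa [← mem_closedBall_iff_norm']
  have hr : 0 < r := (norm_nonneg _).trans_lt (hdist.trans_lt hρ)
  have hnorm : ‖(r : ℂ)‖ = r := Complex.norm_of_nonneg hr.le
  have hw₀ : w ≠ 0 := by
    rintro rfl
    rw [sub_zero, hnorm] at hdist
    exact hdist.not_gt hρ
  calc |arg w| = InnerProductGeometry.angle (r : ℂ) w :=
        (angle_ofReal_left_eq_abs_arg hr hw₀).symm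
    _ ≤ Real.arcsin (‖(r : ℂ) - w‖ / ‖(r : ℂ)‖) :=
        angle_le_arcsin_norm_sub_div_norm (ofReal_ne_zero.2 hr.ne')
          (hdist.trans (hρ.le.trans_eq hnorm.symm))
    _ ≤ Real.arcsin (ρ / r) := by
        rw [hnorm]
        gcongr

section AffineMap

variable (a b c d : ℝ)

theorem wC_one_half : wC a b c d (1 / 2) = ((a + b + c + d) / 2 : ℝ) := by
  unfold wC
  push_cast
  ring

theorem dist_wC_wC (z z' : ℂ) :
    dist (wC a b c d z) (wC a b c d z') = |a + c - b - d| * dist z z' := by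
  have hsub : wC a b c d z - wC a b c d z' = (a + c - b - d : ℝ) * (z - z') := by
    unfold wC
    push_cast
    ring
  rw [dist_eq, dist_eq, hsub, norm_mul, norm_real, Real.norm_eq_abs]

theorem mapsTo_wC_closedBall (z₀ : ℂ) (r : ℝ) :
    Set.MapsTo (wC a b c d) (Metric.closedBall z₀ r)
      (Metric.closedBall (wC a b c d z₀) (|a + c - b - d| * r)) := by
  intro z hz
  rw [Metric.mem_closedBall, dist_wC_wC]
  exact mul_le_mul_of_nonneg_left hz (abs_nonneg _)

end AffineMap

theorem stmt7_general {a b c d : ℝ} (hac : 0 < a + c) (hbd : 0 < b + d) {z : ℂ}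
    (hz : z ∈ Metric.closedBall ((1 : ℂ) / 2) (1 / 2)) :
    |arg (wC a b c d z)| ≤ Real.arcsin (|a + c - b - d| / (a + b + c + d)) := by
  have hradius : |a + c - b - d| * (1 / 2) < (a + b + c + d) / 2 := by
    have : |a + c - b - d| < a + b + c + d := abs_lt.2 ⟨by linarith, by linarith⟩
    linarith
  have hmem := mapsTo_wC_closedBall a b c d (1 / 2) (1 / 2) hz
  rw [wC_one_half] at hmem
  have hratio : |a + c - b - d| * (1 / 2) / ((a + b + c + d) / 2) =
      |a + c - b - d| / (a + b + c + d) := by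
    rw [mul_one_div, div_div_div_cancel_right₀ two_ne_zero]
  exact hratio ▸ abs_arg_le_arcsin_of_mem_closedBall hradius hmem

theorem stmt7 (a b c d : ℝ) (ha : 0 < a) (hb : 0 < b) (hc : 0 < c) (hd : 0 < d) :
    ∀ z ∈ Metric.ball ((1 : ℂ) / 2) (1 / 2),
      |Complex.arg (wC a b c d z)| ≤
        Real.arcsin (|a + c - b - d| / (a + b + c + d)) :=
  fun _ hz ↦ stmt7_general (add_pos ha hc) (add_pos hb hd) (Metric.ball_subset_closedBall hz)
end

section
/- Let f : (0,1) → ℝ satisfy |f(x) − f(y)| ≤ K·h(x, y) for some K ≥ 0 and all x, y ∈ (0,1), and define (Lf)(x) = Σ_{i=1}^k p_i f(φ̃_{A_i}(x)). Then there exist a constant c ∈ ℝ and a constant C ≥ 0 such that for every n ≥ 1 and every x ∈ (0,1), |(Lⁿf)(x) − c| ≤ C·τ(𝒜, p)^{n−1}; in particular the iterates Lⁿf converge uniformly on (0,1) to a constant function. -/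
/-- The projective action `φ̃_A` of `A = (a, b; c, d)` in coordinates on `(0,1)`. -/
noncomputable def phiM (M : Matrix (Fin 2) (Fin 2) ℝ) (x : ℝ) : ℝ :=
  ((M 0 0 - M 0 1) * x + M 0 1) / ((M 0 0 + M 1 0 - M 0 1 - M 1 1) * x + M 0 1 + M 1 1)

/-- `ψ(A) = min{ad/(bc), bc/(ad)}`. -/
noncomputable def psiM (M : Matrix (Fin 2) (Fin 2) ℝ) : ℝ :=
  min (M 0 0 * M 1 1 / (M 0 1 * M 1 0)) (M 0 1 * M 1 0 / (M 0 0 * M 1 1))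

/-- The Birkhoff contraction coefficient `τ(A) = (1 − √ψ(A))/(1 + √ψ(A))`. -/
noncomputable def tauM (M : Matrix (Fin 2) (Fin 2) ℝ) : ℝ :=
  (1 - Real.sqrt (psiM M)) / (1 + Real.sqrt (psiM M))

/-- The Hilbert projective metric in coordinates on `(0,1)`. -/
noncomputable def hilbMetric (x y : ℝ) : ℝ :=
  |Real.log (x * (1 - y) / (y * (1 - x)))|

/-- The transfer operator `(Lf)(x) = Σ_i p_i f(φ̃_{A_i}(x))`. -/
noncomputable def transferOp {k : ℕ} (A : Fin k → Matrix (Fin 2) (Fin 2) ℝ)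
    (p : Fin k → ℝ) (g : ℝ → ℝ) : ℝ → ℝ :=
  fun x => ∑ i, p i * g (phiM (A i) x)

/-!
In the coordinate `x / (1 - x)` the map `φ̃_A` becomes the Möbius transformation
`r ↦ (a r + b) / (c r + d)`, and `hilbMetric` becomes the distance between logarithms. In the
coordinate `log r` the derivative of this transformation is `det A * r / ((a r + b) (c r + d))`,
which the Cauchy–Schwarz inequality bounds by `τ(A)`; moreover the image of the positive half-line
lies between `a / c` and `b / d`, so it has finite logarithmic diameter. Hence `Lⁿ f` is Lipschitz
with constant `K τⁿ`, where `τ = ∑ pᵢ τ(Aᵢ)`, and one further application of `L` bounds the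
oscillation by a constant times `τⁿ`. As `L` averages, the closed convex hulls of the ranges of the
iterates are nested, and any point `c` common to them is within the oscillation of each iterate.
-/

section MarkovOp

open Set

variable {ι X : Type*} [Fintype ι]

/-- The Markov operator of the iterated function system `φ` with constant weights `p`, acting on
real functions. `transferOp A p` is the case where `φ i` is the projective action of `A i`. -/
def markovOp (p : ι → ℝ) (φ : ι → X → X) (g : X → ℝ) : X → ℝ :=
  fun x => ∑ i, p i * g (φ i x)

variable {p τ D : ι → ℝ} {φ : ι → X → X} {g : X → ℝ} {S : Set X} {d : X → X → ℝ} {K : ℝ}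

lemma abs_markovOp_sub_markovOp_le {ε : ι → ℝ} {x y : X} (hp : ∀ i, 0 ≤ p i)
    (h : ∀ i, |g (φ i x) - g (φ i y)| ≤ ε i) :
    |markovOp p φ g x - markovOp p φ g y| ≤ ∑ i, p i * ε i :=
  calc |markovOp p φ g x - markovOp p φ g y|
      = |∑ i, p i * (g (φ i x) - g (φ i y))| := by
        simp only [markovOp, mul_sub, Finset.sum_sub_distrib]
    _ ≤ ∑ i, |p i * (g (φ i x) - g (φ i y))| := Finset.abs_sum_le_sum_abs _ _
    _ ≤ ∑ i, p i * ε i := Finset.sum_le_sum fun i _ => by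
        rw [abs_mul, abs_of_nonneg (hp i)]
        exact mul_le_mul_of_nonneg_left (h i) (hp i)

lemma abs_markovOp_sub_const_le {r ε : ℝ} {x : X} (hp : ∀ i, 0 ≤ p i) (hp_sum : ∑ i, p i = 1)
    (h : ∀ i, |g (φ i x) - r| ≤ ε) : |markovOp p φ g x - r| ≤ ε :=
  calc |markovOp p φ g x - r|
      = |∑ i, p i * (g (φ i x) - r)| := by
        simp only [markovOp, mul_sub, Finset.sum_sub_distrib, ← Finset.sum_mul, hp_sum, one_mul]
    _ ≤ ∑ i, |p i * (g (φ i x) - r)| := Finset.abs_sum_le_sum_abs _ _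
    _ ≤ ∑ i, p i * ε := Finset.sum_le_sum fun i _ => by
        rw [abs_mul, abs_of_nonneg (hp i)]
        exact mul_le_mul_of_nonneg_left (h i) (hp i)
    _ = ε := by rw [← Finset.sum_mul, hp_sum, one_mul]

lemma abs_markovOp_iterate_sub_const_le {r ε : ℝ} (hp : ∀ i, 0 ≤ p i) (hp_sum : ∑ i, p i = 1)
    (hφ : ∀ i, MapsTo (φ i) S S) (h : ∀ x ∈ S, |g x - r| ≤ ε) (n : ℕ) :
    ∀ x ∈ S, |(markovOp p φ)^[n] g x - r| ≤ ε := by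
  induction n with
  | zero => exact h
  | succ n ih =>
    intro x hx
    rw [Function.iterate_succ_apply']
    exact abs_markovOp_sub_const_le hp hp_sum fun i => ih _ (hφ i hx)

lemma abs_markovOp_iterate_sub_iterate_le_max {ε : ℕ → ℝ} (hp : ∀ i, 0 ≤ p i)
    (hp_sum : ∑ i, p i = 1) (hφ : ∀ i, MapsTo (φ i) S S)
    (hosc : ∀ n, ∀ x ∈ S, ∀ y ∈ S, |(markovOp p φ)^[n] g x - (markovOp p φ)^[n] g y| ≤ ε n)
    (m n : ℕ) {x y : X} (hx : x ∈ S) (hy : y ∈ S) :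
    |(markovOp p φ)^[m] g x - (markovOp p φ)^[n] g y| ≤ max (ε m) (ε n) := by
  wlog hmn : m ≤ n generalizing m n x y
  · rw [abs_sub_comm, max_comm]
    exact this n m hy hx (le_of_not_ge hmn)
  obtain ⟨k, rfl⟩ := Nat.exists_eq_add_of_le' hmn
  rw [abs_sub_comm, Function.iterate_add_apply]
  exact le_max_of_le_left <| abs_markovOp_iterate_sub_const_le hp hp_sum hφ
    (fun z hz => hosc m z hz x hx) k y hy

lemma exists_abs_markovOp_iterate_sub_le {ε : ℕ → ℝ} (hp : ∀ i, 0 ≤ p i)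
    (hp_sum : ∑ i, p i = 1) (hφ : ∀ i, MapsTo (φ i) S S)
    (hosc : ∀ n, ∀ x ∈ S, ∀ y ∈ S, |(markovOp p φ)^[n] g x - (markovOp p φ)^[n] g y| ≤ ε n) :
    ∃ c, ∀ n, ∀ x ∈ S, |(markovOp p φ)^[n] g x - c| ≤ ε n := by
  rcases S.eq_empty_or_nonempty with rfl | hS
  · simp
  have hε (n : ℕ) : 0 ≤ ε n := (abs_nonneg _).trans (hosc n _ hS.some_mem _ hS.some_mem)
  have hne := (univ_nonempty (α := ℕ)).prod hS
  obtain ⟨c, hc_lower, hc_upper⟩ := exists_between_of_forall_le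
    (hne.image fun q => (markovOp p φ)^[q.1] g q.2 - ε q.1)
    (hne.image fun q => (markovOp p φ)^[q.1] g q.2 + ε q.1) (by
      rintro _ ⟨⟨m, x⟩, ⟨-, hx⟩, rfl⟩ _ ⟨⟨n, y⟩, ⟨-, hy⟩, rfl⟩
      have h := (le_abs_self _).trans
        (abs_markovOp_iterate_sub_iterate_le_max hp hp_sum hφ hosc m n hx hy)
      have := max_le_add_of_nonneg (hε m) (hε n)
      dsimp only
      linarith)
  refine ⟨c, fun n x hx => abs_sub_le_iff.2 ⟨?_, ?_⟩⟩
  · linarith [hc_lower ⟨(n, x), ⟨mem_univ n, hx⟩, rfl⟩]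
  · linarith [hc_upper ⟨(n, x), ⟨mem_univ n, hx⟩, rfl⟩]

lemma abs_markovOp_iterate_sub_iterate_le (hp : ∀ i, 0 ≤ p i) (hφ : ∀ i, MapsTo (φ i) S S)
    (hτ : ∀ i, 0 ≤ τ i) (hcontr : ∀ i, ∀ x ∈ S, ∀ y ∈ S, d (φ i x) (φ i y) ≤ τ i * d x y)
    (hK : 0 ≤ K) (hg : ∀ x ∈ S, ∀ y ∈ S, |g x - g y| ≤ K * d x y) (n : ℕ) :
    ∀ x ∈ S, ∀ y ∈ S,
      |(markovOp p φ)^[n] g x - (markovOp p φ)^[n] g y| ≤ K * (∑ i, p i * τ i) ^ n * d x y := by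
  have hτ_mean : 0 ≤ ∑ i, p i * τ i := Finset.sum_nonneg fun i _ => mul_nonneg (hp i) (hτ i)
  induction n with
  | zero => simpa using hg
  | succ n ih =>
    intro x hx y hy
    simp only [Function.iterate_succ_apply']
    calc _ ≤ ∑ i, p i * (K * (∑ j, p j * τ j) ^ n * (τ i * d x y)) :=
          abs_markovOp_sub_markovOp_le hp fun i => (ih _ (hφ i hx) _ (hφ i hy)).trans <| by
            gcongr
            exact hcontr i x hx y hy
      _ = ∑ i, p i * τ i * (K * (∑ j, p j * τ j) ^ n * d x y) :=
          Finset.sum_congr rfl fun i _ => by ring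
      _ = K * (∑ i, p i * τ i) ^ (n + 1) * d x y := by
          rw [← Finset.sum_mul]
          ring

lemma abs_markovOp_iterate_succ_sub_iterate_succ_le (hp : ∀ i, 0 ≤ p i)
    (hφ : ∀ i, MapsTo (φ i) S S) (hτ : ∀ i, 0 ≤ τ i)
    (hcontr : ∀ i, ∀ x ∈ S, ∀ y ∈ S, d (φ i x) (φ i y) ≤ τ i * d x y)
    (hdiam : ∀ i, ∀ x ∈ S, ∀ y ∈ S, d (φ i x) (φ i y) ≤ D i)
    (hK : 0 ≤ K) (hg : ∀ x ∈ S, ∀ y ∈ S, |g x - g y| ≤ K * d x y) (n : ℕ) :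
    ∀ x ∈ S, ∀ y ∈ S, |(markovOp p φ)^[n + 1] g x - (markovOp p φ)^[n + 1] g y| ≤
      K * (∑ i, p i * D i) * (∑ i, p i * τ i) ^ n := by
  intro x hx y hy
  have hτ_mean : 0 ≤ ∑ i, p i * τ i := Finset.sum_nonneg fun i _ => mul_nonneg (hp i) (hτ i)
  simp only [Function.iterate_succ_apply']
  calc _ ≤ ∑ i, p i * (K * (∑ j, p j * τ j) ^ n * D i) :=
        abs_markovOp_sub_markovOp_le hp fun i =>
          (abs_markovOp_iterate_sub_iterate_le hp hφ hτ hcontr hK hg n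
            _ (hφ i hx) _ (hφ i hy)).trans <| by
            gcongr
            exact hdiam i x hx y hy
    _ = ∑ i, p i * D i * (K * (∑ j, p j * τ j) ^ n) :=
        Finset.sum_congr rfl fun i _ => by ring
    _ = K * (∑ i, p i * D i) * (∑ i, p i * τ i) ^ n := by
        rw [← Finset.sum_mul]
        ring

theorem exists_abs_markovOp_iterate_succ_sub_le (hp : ∀ i, 0 ≤ p i) (hp_sum : ∑ i, p i = 1)
    (hφ : ∀ i, MapsTo (φ i) S S) (hτ : ∀ i, 0 ≤ τ i)
    (hcontr : ∀ i, ∀ x ∈ S, ∀ y ∈ S, d (φ i x) (φ i y) ≤ τ i * d x y)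
    (hdiam : ∀ i, ∀ x ∈ S, ∀ y ∈ S, d (φ i x) (φ i y) ≤ D i)
    (hK : 0 ≤ K) (hg : ∀ x ∈ S, ∀ y ∈ S, |g x - g y| ≤ K * d x y) :
    ∃ c, ∀ n, ∀ x ∈ S, |(markovOp p φ)^[n + 1] g x - c| ≤
      K * (∑ i, p i * D i) * (∑ i, p i * τ i) ^ n :=
  exists_abs_markovOp_iterate_sub_le (g := markovOp p φ g) hp hp_sum hφ
    (abs_markovOp_iterate_succ_sub_iterate_succ_le hp hφ hτ hcontr hdiam hK hg)

end MarkovOp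

section ProjectiveAction

open Set Real

/-- The affine coordinate `x / (1 - x)` of the point `[x : 1 - x]` of the projective line; it maps
`(0,1)` onto the positive half-line. -/
noncomputable def odds (x : ℝ) : ℝ := x / (1 - x)

/-- The Möbius transformation `r ↦ (a r + b) / (c r + d)`, which is the action of
`M = (a, b; c, d)` on the affine coordinate `odds`. -/
noncomputable def moebius (M : Matrix (Fin 2) (Fin 2) ℝ) (r : ℝ) : ℝ :=
  (M 0 0 * r + M 0 1) / (M 1 0 * r + M 1 1)

/-- The projective diameter of the image of the positive cone under `M = (a, b; c, d)`, i.e. the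
logarithmic distance `|log (a / c) - log (b / d)|` between the two columns of `M`. -/
noncomputable def projDiam (M : Matrix (Fin 2) (Fin 2) ℝ) : ℝ :=
  |log (M 0 0 / M 1 0) - log (M 0 1 / M 1 1)|

variable {M : Matrix (Fin 2) (Fin 2) ℝ} {r s x y : ℝ}

lemma odds_pos (hx : x ∈ Ioo 0 1) : 0 < odds x := div_pos hx.1 (sub_pos.2 hx.2)

lemma hilbMetric_eq_abs_log_odds_sub (hx : x ∈ Ioo 0 1) (hy : y ∈ Ioo 0 1) :
    hilbMetric x y = |log (odds x) - log (odds y)| := by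
  rw [← log_div (odds_pos hx).ne' (odds_pos hy).ne', odds, odds, div_div_div_eq, hilbMetric,
    mul_comm y]

lemma phiM_eq_div_add (M : Matrix (Fin 2) (Fin 2) ℝ) (x : ℝ) :
    phiM M x = (M 0 0 * x + M 0 1 * (1 - x)) /
      ((M 0 0 * x + M 0 1 * (1 - x)) + (M 1 0 * x + M 1 1 * (1 - x))) := by
  unfold phiM
  congr 1 <;> ring

lemma row_combination_pos (hM : ∀ i j, 0 < M i j) (hx : x ∈ Ioo 0 1) (i : Fin 2) :
    0 < M i 0 * x + M i 1 * (1 - x) :=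
  add_pos (mul_pos (hM i 0) hx.1) (mul_pos (hM i 1) (sub_pos.2 hx.2))

lemma mapsTo_phiM (hM : ∀ i j, 0 < M i j) : MapsTo (phiM M) (Ioo 0 1) (Ioo 0 1) := by
  intro x hx
  have hrow := row_combination_pos hM hx
  rw [phiM_eq_div_add]
  exact ⟨div_pos (hrow 0) (add_pos (hrow 0) (hrow 1)),
    (div_lt_one (add_pos (hrow 0) (hrow 1))).2 (lt_add_of_pos_right _ (hrow 1))⟩

lemma odds_phiM (hM : ∀ i j, 0 < M i j) (hx : x ∈ Ioo 0 1) :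
    odds (phiM M x) = moebius M (odds x) := by
  have hrow := row_combination_pos hM hx
  have hx' : 1 - x ≠ 0 := (sub_pos.2 hx.2).ne'
  have hrow_div (i : Fin 2) :
      M i 0 * (x / (1 - x)) + M i 1 = (M i 0 * x + M i 1 * (1 - x)) / (1 - x) := by
    rw [add_div, mul_div_assoc, mul_div_cancel_right₀ _ hx']
  have hodds {u v : ℝ} (huv : u + v ≠ 0) : odds (u / (u + v)) = u / v := by
    rw [odds, one_sub_div huv, add_sub_cancel_left, div_div_div_cancel_right₀ huv]
  rw [phiM_eq_div_add, hodds (add_pos (hrow 0) (hrow 1)).ne', moebius, odds, hrow_div, hrow_div,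
    div_div_div_cancel_right₀ hx']

lemma moebius_mem_uIcc (hM : ∀ i j, 0 < M i j) (hr : 0 < r) :
    moebius M r ∈ uIcc (M 0 0 / M 1 0) (M 0 1 / M 1 1) := by
  have hc := mul_pos (hM 1 0) hr
  have hd := hM 1 1
  rw [← segment_eq_uIcc]
  refine ⟨M 1 0 * r / (M 1 0 * r + M 1 1), M 1 1 / (M 1 0 * r + M 1 1), by positivity,
    by positivity, by rw [← add_div, div_self (by positivity)], ?_⟩
  have hc₀ := (hM 1 0).ne'
  simp only [smul_eq_mul, moebius]
  field_simp

lemma abs_log_moebius_sub_le_projDiam (hM : ∀ i j, 0 < M i j) (hr : 0 < r) (hs : 0 < s) :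
    |log (moebius M r) - log (moebius M s)| ≤ projDiam M := by
  have hmono : MonotoneOn log (uIcc (M 0 0 / M 1 0) (M 0 1 / M 1 1)) :=
    strictMonoOn_log.monotoneOn.mono fun t ht =>
      (lt_min (div_pos (hM 0 0) (hM 1 0)) (div_pos (hM 0 1) (hM 1 1))).trans_le ht.1
  exact dist_le_of_mem_uIcc (hmono.mapsTo_uIcc (moebius_mem_uIcc hM hr))
    (hmono.mapsTo_uIcc (moebius_mem_uIcc hM hs))

lemma one_sub_sqrt_min_div_one_add_sqrt_min {u v : ℝ} (hu : 0 < u) (hv : 0 < v) :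
    (1 - √(min (u / v) (v / u))) / (1 + √(min (u / v) (v / u))) = |√u - √v| / (√u + √v) := by
  wlog huv : u ≤ v generalizing u v
  · rw [min_comm, abs_sub_comm, add_comm √u]
    exact this hv hu (le_of_not_ge huv)
  have hsqrt : √v ≠ 0 := (sqrt_pos.2 hv).ne'
  have hmin : u / v ≤ v / u := ((div_le_one hv).2 huv).trans ((one_le_div hu).2 huv)
  rw [min_eq_left hmin, sqrt_div hu.le, abs_sub_comm,
    abs_of_nonneg (sub_nonneg.2 (sqrt_le_sqrt huv)), one_sub_div hsqrt, one_add_div hsqrt,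
    div_div_div_cancel_right₀ hsqrt, add_comm]

lemma tauM_eq_abs_sqrt_sub_sqrt_div (hM : ∀ i j, 0 < M i j) :
    tauM M = |√(M 0 0 * M 1 1) - √(M 0 1 * M 1 0)| / (√(M 0 0 * M 1 1) + √(M 0 1 * M 1 0)) :=
  one_sub_sqrt_min_div_one_add_sqrt_min (mul_pos (hM 0 0) (hM 1 1)) (mul_pos (hM 0 1) (hM 1 0))

lemma tauM_nonneg (hM : ∀ i j, 0 < M i j) : 0 ≤ tauM M := by
  rw [tauM_eq_abs_sqrt_sub_sqrt_div hM]
  positivity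

lemma sq_sqrt_mul_add_sqrt_mul_le {a b c d : ℝ} (ha : 0 ≤ a) (hb : 0 ≤ b) (hc : 0 ≤ c)
    (hd : 0 ≤ d) : (√(a * d) + √(b * c)) ^ 2 ≤ (a + b) * (c + d) := by
  have had := sq_sqrt (mul_nonneg ha hd)
  have hbc := sq_sqrt (mul_nonneg hb hc)
  have hamgm : 2 * (√(a * d) * √(b * c)) ≤ a * c + b * d := by
    rw [← sqrt_mul (mul_nonneg ha hd), show a * d * (b * c) = (a * c) * (b * d) by ring,
      sqrt_mul (mul_nonneg ha hc), ← mul_assoc]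
    calc 2 * √(a * c) * √(b * d) ≤ √(a * c) ^ 2 + √(b * d) ^ 2 := two_mul_le_add_sq _ _
      _ = a * c + b * d := by rw [sq_sqrt (mul_nonneg ha hc), sq_sqrt (mul_nonneg hb hd)]
  linarith [add_sq √(a * d) √(b * c)]

lemma abs_det_mul_div_le_tauM (hM : ∀ i j, 0 < M i j) (hr : 0 < r) :
    |M.det * r / ((M 0 0 * r + M 0 1) * (M 1 0 * r + M 1 1))| ≤ tauM M := by
  have had := mul_pos (hM 0 0) (hM 1 1)
  have hbc := mul_pos (hM 0 1) (hM 1 0)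
  have hden : 0 < (M 0 0 * r + M 0 1) * (M 1 0 * r + M 1 1) :=
    mul_pos (add_pos (mul_pos (hM 0 0) hr) (hM 0 1)) (add_pos (mul_pos (hM 1 0) hr) (hM 1 1))
  set P := √(M 0 0 * M 1 1) with hP
  set Q := √(M 0 1 * M 1 0) with hQ
  have hPQ : 0 < P + Q := add_pos (sqrt_pos.2 had) (sqrt_pos.2 hbc)
  have hdet : M.det = (P - Q) * (P + Q) := by
    rw [Matrix.det_fin_two, ← sq_sqrt had.le, ← sq_sqrt hbc.le, ← hP, ← hQ]
    ring
  have hcauchy : r * (P + Q) ^ 2 ≤ (M 0 0 * r + M 0 1) * (M 1 0 * r + M 1 1) :=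
    calc r * (P + Q) ^ 2 = (√(M 0 0 * r * M 1 1) + √(M 0 1 * (M 1 0 * r))) ^ 2 := by
          rw [mul_right_comm, ← mul_assoc, sqrt_mul had.le, sqrt_mul hbc.le, ← add_mul, mul_pow,
            sq_sqrt hr.le, mul_comm]
      _ ≤ _ := sq_sqrt_mul_add_sqrt_mul_le (mul_pos (hM 0 0) hr).le (hM 0 1).le
          (mul_pos (hM 1 0) hr).le (hM 1 1).le
  rw [tauM_eq_abs_sqrt_sub_sqrt_div hM, ← hP, ← hQ, hdet, abs_div, abs_mul, abs_mul,
    abs_of_pos hPQ, abs_of_pos hr, abs_of_pos hden, div_le_div_iff₀ hden hPQ]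
  calc |P - Q| * (P + Q) * r * (P + Q) = |P - Q| * (r * (P + Q) ^ 2) := by ring
    _ ≤ _ := mul_le_mul_of_nonneg_left hcauchy (abs_nonneg _)

lemma hasDerivAt_log_moebius_exp (hM : ∀ i j, 0 < M i j) (t : ℝ) :
    HasDerivAt (fun t => log (moebius M (exp t)))
      (M.det * exp t / ((M 0 0 * exp t + M 0 1) * (M 1 0 * exp t + M 1 1))) t := by
  have hrow (i : Fin 2) (t : ℝ) : M i 0 * exp t + M i 1 ≠ 0 :=
    (add_pos (mul_pos (hM i 0) (exp_pos t)) (hM i 1)).ne'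
  have hrow_deriv (i : Fin 2) : HasDerivAt (fun t => log (M i 0 * exp t + M i 1))
      (M i 0 * exp t / (M i 0 * exp t + M i 1)) t :=
    (((hasDerivAt_exp t).const_mul (M i 0)).add_const (M i 1)).log (hrow i t)
  have hsplit : (fun t => log (moebius M (exp t))) =
      (fun t => log (M 0 0 * exp t + M 0 1)) - fun t => log (M 1 0 * exp t + M 1 1) :=
    funext fun t => log_div (hrow 0 t) (hrow 1 t)
  rw [hsplit]
  refine ((hrow_deriv 0).sub (hrow_deriv 1)).congr_deriv ?_
  rw [div_sub_div _ _ (hrow 0 t) (hrow 1 t), Matrix.det_fin_two]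
  ring

lemma abs_log_moebius_sub_le_tauM_mul (hM : ∀ i j, 0 < M i j) (hr : 0 < r) (hs : 0 < s) :
    |log (moebius M r) - log (moebius M s)| ≤ tauM M * |log r - log s| := by
  simpa only [norm_eq_abs, exp_log hr, exp_log hs] using
    convex_univ.norm_image_sub_le_of_norm_hasDerivWithin_le
      (fun t _ => (hasDerivAt_log_moebius_exp hM t).hasDerivWithinAt)
      (fun t _ => abs_det_mul_div_le_tauM hM (exp_pos t)) (mem_univ (log s)) (mem_univ (log r))

lemma hilbMetric_phiM_le_tauM_mul (hM : ∀ i j, 0 < M i j) (hx : x ∈ Ioo 0 1)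
    (hy : y ∈ Ioo 0 1) : hilbMetric (phiM M x) (phiM M y) ≤ tauM M * hilbMetric x y := by
  rw [hilbMetric_eq_abs_log_odds_sub (mapsTo_phiM hM hx) (mapsTo_phiM hM hy), odds_phiM hM hx,
    odds_phiM hM hy, hilbMetric_eq_abs_log_odds_sub hx hy]
  exact abs_log_moebius_sub_le_tauM_mul hM (odds_pos hx) (odds_pos hy)

lemma hilbMetric_phiM_le_projDiam (hM : ∀ i j, 0 < M i j) (hx : x ∈ Ioo 0 1)
    (hy : y ∈ Ioo 0 1) : hilbMetric (phiM M x) (phiM M y) ≤ projDiam M := by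
  rw [hilbMetric_eq_abs_log_odds_sub (mapsTo_phiM hM hx) (mapsTo_phiM hM hy), odds_phiM hM hx,
    odds_phiM hM hy]
  exact abs_log_moebius_sub_le_projDiam hM (odds_pos hx) (odds_pos hy)

end ProjectiveAction

theorem stmt13_general {k : ℕ} (A : Fin k → Matrix (Fin 2) (Fin 2) ℝ)
    (hpos : ∀ i s t, 0 < A i s t) (p : Fin k → ℝ) (hp : ∀ i, 0 ≤ p i) (hps : ∑ i, p i = 1)
    (f : ℝ → ℝ) (K : ℝ) (hK : 0 ≤ K)
    (hlip : ∀ x ∈ Set.Ioo (0 : ℝ) 1, ∀ y ∈ Set.Ioo (0 : ℝ) 1,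
      |f x - f y| ≤ K * hilbMetric x y) :
    ∃ c : ℝ, ∀ n : ℕ, 1 ≤ n → ∀ x ∈ Set.Ioo (0 : ℝ) 1,
      |((transferOp A p)^[n] f) x - c| ≤
        K * (∑ i, p i * projDiam (A i)) * (∑ i, p i * tauM (A i)) ^ (n - 1) := by
  obtain ⟨c, hc⟩ := exists_abs_markovOp_iterate_succ_sub_le hp hps
    (fun i => mapsTo_phiM (hpos i)) (fun i => tauM_nonneg (hpos i))
    (fun i _ hx _ hy => hilbMetric_phiM_le_tauM_mul (hpos i) hx hy)
    (fun i _ hx _ hy => hilbMetric_phiM_le_projDiam (hpos i) hx hy) hK hlip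
  refine ⟨c, fun n hn x hx => ?_⟩
  obtain ⟨m, rfl⟩ := Nat.exists_eq_add_of_le' hn
  exact hc m x hx

theorem stmt13 {k : ℕ} (hk : 1 ≤ k) (A : Fin k → Matrix (Fin 2) (Fin 2) ℝ)
    (hpos : ∀ i s t, 0 < A i s t) (hinv : ∀ i, IsUnit (A i))
    (p : Fin k → ℝ) (hp : ∀ i, 0 ≤ p i) (hps : ∑ i, p i = 1)
    (f : ℝ → ℝ) (K : ℝ) (hK : 0 ≤ K)
    (hlip : ∀ x ∈ Set.Ioo (0 : ℝ) 1, ∀ y ∈ Set.Ioo (0 : ℝ) 1,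
      |f x - f y| ≤ K * hilbMetric x y) :
    ∃ c C : ℝ, 0 ≤ C ∧ ∀ n : ℕ, 1 ≤ n → ∀ x ∈ Set.Ioo (0 : ℝ) 1,
      |((transferOp A p)^[n] f) x - c| ≤ C * (∑ i, p i * tauM (A i)) ^ (n - 1) := by
  obtain ⟨c, hc⟩ := stmt13_general A hpos p hp hps f K hK hlip
  exact ⟨c, _, mul_nonneg hK (Finset.sum_nonneg fun i _ => mul_nonneg (hp i) (abs_nonneg _)), hc⟩
end
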